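/- Let L = (S, ι, →) be an LTS and let norm_fdr(L) = (S', ι', →') be its failures-divergences normal form. For all sequences ρ ∈ Act*, it holds that ρ ∉ (divergences(L) ∪ weaktraces(L)) if and only if ι' ⟶ρ ∅ in norm_fdr(L). -/

import Mathlib

/-- A labelled transition system with states `S` and visible actions `Act`.
Transition labels are `Option Act`, where `none` plays the role of the
internal action τ and `some a` is the visible action `a ∈ Act`. -/
structure LTS (S : Type*) (Act : Type*) where
  init : S
  tr : S → Option Act → S → Prop

namespace LTS

variable {S S₁ S₂ : Type*} {Act : Type*}

/-- The trace relation: `s ⟶ε t` iff `s = t`, and `s ⟶(σ a) t` iff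
`s ⟶σ u` and `u —a→ t` for some `u`. -/
inductive Trace (L : LTS S Act) : S → List (Option Act) → S → Prop
  | nil (s : S) : Trace L s [] s
  | snoc {s u t : S} {σ : List (Option Act)} {a : Option Act} :
      Trace L s σ u → L.tr u a t → Trace L s (σ ++ [a]) t

/-- The weak transition relation `s ⇒ρ t` for `ρ ∈ Act*`. -/
inductive Weak (L : LTS S Act) : S → List Act → S → Prop
  | refl (s : S) : Weak L s [] s
  | tau {s t : S} : L.tr s none t → Weak L s [] t
  | act {s t : S} {a : Act} : L.tr s (some a) t → Weak L s [a] t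
  | comp {s u t : S} {ρ σ : List Act} :
      Weak L s ρ u → Weak L u σ t → Weak L s (ρ ++ σ) t

/-- A state is reachable iff some trace leads from the initial state to it. -/
def Reachable (L : LTS S Act) (s : S) : Prop := ∃ σ, L.Trace L.init σ s

/-- A state is stable iff it has no outgoing τ-transition. -/
def Stable (L : LTS S Act) (s : S) : Prop := ¬ ∃ t, L.tr s none t

/-- A state diverges iff there is an infinite sequence of τ-transitions from it. -/
def Diverges (L : LTS S Act) (s : S) : Prop :=
  ∃ f : ℕ → S, f 0 = s ∧ ∀ n, L.tr (f n) none (f (n + 1))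

/-- The weak traces of an LTS. -/
def weaktraces (L : LTS S Act) : Set (List Act) := {ρ | ∃ t, L.Weak L.init ρ t}

/-- The divergences of an LTS: all `ρ σ` such that `ι ⇒ρ t` for a diverging `t`. -/
def divergences (L : LTS S Act) : Set (List Act) :=
  {w | ∃ ρ σ : List Act, w = ρ ++ σ ∧ ∃ t, L.Weak L.init ρ t ∧ L.Diverges t}

/-- The refusals of a (stable) state: all sets `X` of visible actions none of
which is enabled in `s`. -/
def refusals (L : LTS S Act) (s : S) : Set (Set Act) :=
  {X | ∀ a ∈ X, ¬ ∃ t, L.tr s (some a) t}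

/-- The refusals of a set of states. -/
def refusalsSet (L : LTS S Act) (U : Set S) : Set (Set Act) :=
  {X | ∃ s ∈ U, L.Stable s ∧ X ∈ L.refusals s}

/-- The stable failures of an LTS. -/
def failures (L : LTS S Act) : Set (List Act × Set Act) :=
  {p | ∃ t, L.Weak L.init p.1 t ∧ L.Stable t ∧ p.2 ∈ L.refusals t}

/-- The failures with post-divergence details obscured. -/
def failuresBot (L : LTS S Act) : Set (List Act × Set Act) :=
  L.failures ∪ {p | p.1 ∈ L.divergences}

/-- The normal form of an LTS. -/
def norm (L : LTS S Act) : LTS (Set S) Act where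
  init := {s | L.Weak L.init [] s}
  tr U a V := ∃ b : Act, a = some b ∧ V = {t | ∃ s ∈ U, L.Weak s [b] t}

/-- The failures-divergences normal form of an LTS. -/
def normFdr (L : LTS S Act) : LTS (Set S) Act where
  init := {s | L.Weak L.init [] s}
  tr U a V := ∃ b : Act, a = some b ∧ (¬ ∃ s ∈ U, L.Diverges s) ∧
      V = {t | ∃ s ∈ U, L.Weak s [b] t}

/-- The product of two LTSs. -/
def prod (L₁ : LTS S₁ Act) (L₂ : LTS S₂ Act) : LTS (S₁ × S₂) Act where
  init := (L₁.init, L₂.init)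
  tr p a q :=
    (a = none ∧ q.1 = p.1 ∧ L₂.tr p.2 none q.2) ∨
    (∃ b : Act, a = some b ∧ L₁.tr p.1 (some b) q.1 ∧ L₂.tr p.2 (some b) q.2)

end LTS

/-!
The state of `normFdr` reached along `ρ` is the set of all states weakly reachable along `ρ`, and
it is reached exactly when no state weakly reachable along a proper prefix of `ρ` diverges. When
that set is empty, there is no diverging state for the prefix `ρ` itself either, so `ρ` is not a
divergence.
-/

theorem forall_proper_prefix_concat_iff {α : Type*} {l : List α} {a : α} {P : List α → Prop} :
    (∀ l', l' <+: l ++ [a] → l' ≠ l ++ [a] → P l') ↔ (∀ l', l' <+: l → l' ≠ l → P l') ∧ P l := by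
  have not_prefix : ¬ l ++ [a] <+: l := fun h => by simpa using h.length_le
  simp only [List.prefix_concat_iff]
  grind

namespace LTS

variable {S Act : Type*} {L : LTS S Act}

theorem trace_nil_iff {s t : S} : L.Trace s [] t ↔ s = t := by
  refine ⟨fun h => ?_, fun h => h ▸ .nil s⟩
  generalize hσ : ([] : List (Option Act)) = σ at h
  cases h with
  | nil => rfl
  | snoc => simp at hσ

theorem trace_concat_iff {s t : S} {σ : List (Option Act)} {a : Option Act} :
    L.Trace s (σ ++ [a]) t ↔ ∃ u, L.Trace s σ u ∧ L.tr u a t := by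
  refine ⟨fun h => ?_, fun ⟨_, hσ, ha⟩ => .snoc hσ ha⟩
  generalize hσa : σ ++ [a] = σ' at h
  cases h with
  | nil => simp at hσa
  | snoc hσ ha =>
    obtain ⟨rfl, rfl⟩ := List.append_singleton_inj.1 hσa
    exact ⟨_, hσ, ha⟩

theorem weak_append_iff {s t : S} {ρ σ : List Act} :
    L.Weak s (ρ ++ σ) t ↔ ∃ u, L.Weak s ρ u ∧ L.Weak u σ t := by
  refine ⟨fun h => ?_, fun ⟨_, hρ, hσ⟩ => .comp hρ hσ⟩
  generalize hw : ρ ++ σ = w at h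
  induction h generalizing ρ σ with
  | refl s =>
    obtain ⟨rfl, rfl⟩ := List.append_eq_nil_iff.1 hw
    exact ⟨s, .refl s, .refl s⟩
  | @tau s _ hτ =>
    obtain ⟨rfl, rfl⟩ := List.append_eq_nil_iff.1 hw
    exact ⟨s, .refl s, .tau hτ⟩
  | @act s t _ ha =>
    obtain ⟨rfl, rfl⟩ | ⟨rfl, rfl⟩ := List.append_eq_singleton_iff.1 hw
    · exact ⟨s, .refl s, .act ha⟩
    · exact ⟨t, .act ha, .refl t⟩
  | comp h₁ h₂ ih₁ ih₂ =>
    obtain ⟨_, rfl, rfl⟩ | ⟨_, rfl, rfl⟩ := List.append_eq_append_iff.1 hw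
    · obtain ⟨u, hu, hut⟩ := ih₁ rfl
      exact ⟨u, hu, .comp hut h₂⟩
    · obtain ⟨u, hu, hut⟩ := ih₂ rfl
      exact ⟨u, .comp h₁ hu, hut⟩

variable (L) in
/-- The image of a set `U` of states under the weak transition relation `⇒ρ`. In particular
`L.weakImage [] U` is the τ-closure of `U`, and `L.weakImage [a] U` is the target of the
`a`-transition of `U` in the normal form. -/
def weakImage (ρ : List Act) (U : Set S) : Set S := {t | ∃ s ∈ U, L.Weak s ρ t}

theorem weakImage_append (ρ σ : List Act) (U : Set S) :
    L.weakImage (ρ ++ σ) U = L.weakImage σ (L.weakImage ρ U) := by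
  ext t
  simp only [weakImage, Set.mem_ofPred_eq, weak_append_iff]
  tauto

theorem mem_weakImage_singleton {ρ : List Act} {s t : S} :
    t ∈ L.weakImage ρ {s} ↔ L.Weak s ρ t := by
  simp [weakImage]

theorem mem_weaktraces_iff {ρ : List Act} :
    ρ ∈ L.weaktraces ↔ (L.weakImage ρ {L.init}).Nonempty := by
  simp only [weaktraces, Set.mem_ofPred_eq, Set.Nonempty, mem_weakImage_singleton]

theorem mem_divergences_iff {ρ : List Act} :
    ρ ∈ L.divergences ↔ ∃ σ, σ <+: ρ ∧ ∃ t ∈ L.weakImage σ {L.init}, L.Diverges t := by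
  simp only [divergences, Set.mem_ofPred_eq, mem_weakImage_singleton, List.IsPrefix]
  grind

theorem normFdr_init_eq_weakImage : L.normFdr.init = L.weakImage [] {L.init} := by
  ext t
  exact mem_weakImage_singleton.symm

theorem normFdr_tr_some_iff {U V : Set S} {a : Act} :
    L.normFdr.tr U (some a) V ↔ (∀ s ∈ U, ¬ L.Diverges s) ∧ L.weakImage [a] U = V := by
  simp [normFdr, weakImage, eq_comm]

theorem normFdr_trace_weakImage_iff {ρ : List Act} {U V : Set S} :
    L.normFdr.Trace (L.weakImage [] U) (ρ.map some) V ↔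
      (∀ σ, σ <+: ρ → σ ≠ ρ → ∀ s ∈ L.weakImage σ U, ¬ L.Diverges s) ∧
        L.weakImage ρ U = V := by
  induction ρ using List.reverseRecOn generalizing V with
  | nil => simp +contextual [trace_nil_iff]
  | append_singleton ρ a ih =>
    calc L.normFdr.Trace (L.weakImage [] U) ((ρ ++ [a]).map some) V
      _ ↔ ∃ W, L.normFdr.Trace (L.weakImage [] U) (ρ.map some) W ∧ L.normFdr.tr W (some a) V := by
        rw [List.map_append, List.map_singleton, trace_concat_iff]
      _ ↔ ((∀ σ, σ <+: ρ → σ ≠ ρ → ∀ s ∈ L.weakImage σ U, ¬ L.Diverges s) ∧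
            ∀ s ∈ L.weakImage ρ U, ¬ L.Diverges s) ∧ L.weakImage [a] (L.weakImage ρ U) = V := by
        simp only [ih, normFdr_tr_some_iff, and_assoc, exists_and_left, exists_eq_left']
      _ ↔ _ := by rw [← forall_proper_prefix_concat_iff, weakImage_append]

end LTS

/-- `ρ` is neither a divergence nor a weak trace of `L` iff `ρ`
leads to the empty set in the failures-divergences normal form of `L`. -/
theorem normFdr_trace_empty_iff {S Act : Type*} (L : LTS S Act) :
    ∀ ρ : List Act,
      ρ ∉ (L.divergences ∪ L.weaktraces) ↔
        (L.normFdr).Trace (L.normFdr).init (ρ.map some) (∅ : Set S) := by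
  intro ρ
  rw [LTS.normFdr_init_eq_weakImage, LTS.normFdr_trace_weakImage_iff, Set.mem_union, not_or,
    LTS.mem_divergences_iff, LTS.mem_weaktraces_iff, Set.not_nonempty_iff_eq_empty]
  push Not
  refine and_congr_left fun hempty => ⟨fun h σ hσ _ => h σ hσ, fun h σ hσ => ?_⟩
  by_cases hne : σ = ρ
  · simp [hne, hempty]
  · exact h σ hσ hne
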